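/- Assume (σ_min + σ_min,2)/2 < τ < (σ_max + σ_max,2)/2 and τ ≠ σᵢ for all 1 ≤ i ≤ N, and let r ∈ ℝ^{M+N} satisfy Π r = r. Set d₂ = min_{2≤i≤N} |σᵢ − τ|. Then σ₁ ≠ σ_max and σ₁ ≠ σ_min, and for every j ∈ ℕ there exists w ∈ K_j(B₁, r) such that ‖B₁ w + r‖ ≤ 2 · (1 − 2/(1 + (σ_max + τ)/d₂))^{⌊j/2⌋} · ‖r‖, where ⌊·⌋ denotes the integer part. -/

import Mathlib

open Matrix

noncomputable def vnorm {ι : Type*} [Fintype ι] (x : ι → ℝ) : ℝ :=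
  Real.sqrt (∑ i, x i ^ 2)

noncomputable def Krylov {ι : Type*} [Fintype ι] [DecidableEq ι]
    (B : Matrix ι ι ℝ) (r : ι → ℝ) (j : ℕ) : Submodule ℝ (ι → ℝ) :=
  Submodule.span ℝ {x | ∃ i < j, x = (B ^ i) *ᵥ r}

lemma vnorm_eq_norm {ι : Type*} [Fintype ι] (x : ι → ℝ) : vnorm x = ‖WithLp.toLp 2 x‖ := by
  simp [vnorm, EuclideanSpace.norm_eq]

lemma pow_mulVec_eig {ι : Type*} [Fintype ι] [DecidableEq ι] (C : Matrix ι ι ℝ) (x : ι → ℝ)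
    (l : ℝ) (h : C *ᵥ x = l • x) (n : ℕ) : (C ^ n) *ᵥ x = l ^ n • x := by
  induction n with
  | zero => simp
  | succ n ih => rw [pow_succ, ← Matrix.mulVec_mulVec, h, Matrix.mulVec_smul, ih, smul_smul]; ring_nf

lemma aeval_mulVec_eig {ι : Type*} [Fintype ι] [DecidableEq ι] (C : Matrix ι ι ℝ) (x : ι → ℝ)
    (l : ℝ) (h : C *ᵥ x = l • x) (p : Polynomial ℝ) :
    (Polynomial.aeval C p) *ᵥ x = p.eval l • x := by
  rw [Polynomial.aeval_eq_sum_range, Polynomial.eval_eq_sum_range, Matrix.sum_mulVec,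
    Finset.sum_smul]
  refine Finset.sum_congr rfl fun i _ => ?_
  rw [Matrix.smul_mulVec, pow_mulVec_eig C x l h, smul_smul]

lemma aeval_transpose {ι : Type*} [Fintype ι] [DecidableEq ι] (C : Matrix ι ι ℝ) (hC : Cᵀ = C)
    (p : Polynomial ℝ) : (Polynomial.aeval C p)ᵀ = Polynomial.aeval C p := by
  rw [Polynomial.aeval_eq_sum_range, Matrix.transpose_sum]
  refine Finset.sum_congr rfl fun i _ => ?_
  rw [Matrix.transpose_smul, Matrix.transpose_pow, hC]

lemma poly_bound {ι : Type*} [Fintype ι] [DecidableEq ι] (C : Matrix ι ι ℝ) (hC : Cᵀ = C)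
    (r : ι → ℝ) (p : Polynomial ℝ) (m : ℝ) (hm : 0 ≤ m)
    (h : ∀ (l : ℝ) (x : ι → ℝ), C *ᵥ x = l • x → r ⬝ᵥ x ≠ 0 → |p.eval l| ≤ m) :
    vnorm ((Polynomial.aeval C p) *ᵥ r) ≤ m * vnorm r := by
  have hH : C.IsHermitian := by
    rw [Matrix.IsHermitian, Matrix.conjTranspose_eq_transpose_of_trivial, hC]
  rw [vnorm_eq_norm, vnorm_eq_norm]
  refine abs_le_of_sq_le_sq' ?_ (by positivity) |>.2
  rw [mul_pow, ← hH.eigenvectorBasis.sum_sq_norm_inner_left, 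
    ← hH.eigenvectorBasis.sum_sq_norm_inner_left, Finset.mul_sum]
  refine Finset.sum_le_sum fun i _ => ?_
  set e := hH.eigenvectorBasis i with he
  have hee : C *ᵥ ⇑e = hH.eigenvalues i • ⇑e := hH.mulVec_eigenvectorBasis i
  have h1 : ∀ v : ι → ℝ, inner ℝ (WithLp.toLp 2 v) e = v ⬝ᵥ ⇑e := by
    intro v
    rw [EuclideanSpace.inner_eq_star_dotProduct, dotProduct_comm]
    simp
  rw [h1, h1]
  have h2 : (Polynomial.aeval C p *ᵥ r) ⬝ᵥ ⇑e = p.eval (hH.eigenvalues i) * (r ⬝ᵥ ⇑e) := by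
    rw [dotProduct_comm, Matrix.dotProduct_mulVec, ← Matrix.mulVec_transpose,
      aeval_transpose C hC, aeval_mulVec_eig C _ _ hee, smul_dotProduct, dotProduct_comm, smul_eq_mul]
  rw [h2, norm_mul, mul_pow]
  by_cases h0 : r ⬝ᵥ ⇑e = 0
  · simp [h0]
  · have := h _ _ hee h0
    gcongr
    exact this

lemma krylov_poly {ι : Type*} [Fintype ι] [DecidableEq ι] (C : Matrix ι ι ℝ)
    (r : ι → ℝ) (p : Polynomial ℝ) (hp : p.eval 0 = 1) (j : ℕ) (hj : p.natDegree ≤ j) :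
    ∃ w ∈ Krylov C r j, C *ᵥ w + r = (Polynomial.aeval C p) *ᵥ r := by
  have key := congrArg (Polynomial.aeval C) (Polynomial.X_mul_divX_add p)
  rw [Polynomial.coeff_zero_eq_eval_zero, hp] at key
  simp only [map_add, map_mul, Polynomial.aeval_X, map_one] at key
  refine ⟨(Polynomial.aeval C p.divX) *ᵥ r, ?_, ?_⟩
  · rcases Nat.eq_zero_or_pos j with h0 | h0
    · subst h0
      have : p.divX = 0 := by
        rw [Polynomial.divX_eq_zero_iff]
        exact Polynomial.eq_C_of_natDegree_le_zero hj
      simp [this]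
    · have hd : p.divX.natDegree < j := by
        rw [Polynomial.natDegree_divX_eq_natDegree_tsub_one]; omega
      rw [Polynomial.aeval_eq_sum_range' hd, Matrix.sum_mulVec]
      refine Submodule.sum_mem _ fun i hi => ?_
      rw [Matrix.smul_mulVec]
      exact Submodule.smul_mem _ _ (Submodule.subset_span ⟨i, Finset.mem_range.1 hi, rfl⟩)
  · rw [← key, Matrix.mulVec_mulVec, Matrix.add_mulVec, Matrix.one_mulVec]

lemma cheb_exists (a b : ℝ) (ha : 0 < a) (hab : a < b) (k : ℕ) :
    ∃ p : Polynomial ℝ, p.eval 0 = 1 ∧ p.natDegree ≤ 2 * k ∧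
      ∀ l : ℝ, a ≤ |l| → |l| ≤ b → |p.eval l| ≤ 2 * (1 - 2 / (1 + b / a)) ^ k := by
  have hb : 0 < b := ha.trans hab
  have hba : 0 < b - a := by linarith
  have hD : 0 < b ^ 2 - a ^ 2 := by nlinarith
  set ρ : ℝ := (b + a) / (b - a) with hρ
  have hρ0 : 0 < ρ := by positivity
  have hcosh : Real.cosh (Real.log ρ) = (b ^ 2 + a ^ 2) / (b ^ 2 - a ^ 2) := by
    rw [Real.cosh_log hρ0, hρ]
    have : b ^ 2 - a ^ 2 = (b - a) * (b + a) := by ring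
    rw [this]
    field_simp
    ring
  set t : ℝ := (Polynomial.Chebyshev.T ℝ k).eval ((b ^ 2 + a ^ 2) / (b ^ 2 - a ^ 2)) with ht
  have htl : ρ ^ k / 2 ≤ t := by
    rw [ht, ← hcosh, Polynomial.Chebyshev.T_real_cosh, Real.cosh_eq]
    have : Real.exp (((k : ℤ) : ℝ) * Real.log ρ) = ρ ^ k := by
      rw [Int.cast_natCast, Real.exp_nat_mul, Real.exp_log hρ0]
    rw [this]
    have := Real.exp_pos (-(((k : ℤ) : ℝ) * Real.log ρ))
    linarith
  have ht0 : 0 < t := lt_of_lt_of_le (by positivity) htl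
  have hq : 1 - 2 / (1 + b / a) = ρ⁻¹ := by
    rw [hρ]; field_simp; ring
  refine ⟨Polynomial.C t⁻¹ * (Polynomial.Chebyshev.T ℝ k).comp
    (Polynomial.C ((b ^ 2 + a ^ 2) / (b ^ 2 - a ^ 2)) -
      Polynomial.C (2 / (b ^ 2 - a ^ 2)) * Polynomial.X ^ 2), ?_, ?_, ?_⟩
  · simp [Polynomial.eval_comp, ← ht, ht0.ne']
  · refine (Polynomial.natDegree_C_mul_le _ _).trans ?_
    refine Polynomial.natDegree_comp_le.trans ?_
    rw [Polynomial.Chebyshev.natDegree_T, mul_comm]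
    simp only [Int.natAbs_natCast]
    gcongr
    compute_degree
  · intro l h1 h2
    rw [hq]
    simp only [Polynomial.eval_mul, Polynomial.eval_C, Polynomial.eval_comp, Polynomial.eval_sub,
      Polynomial.eval_pow, Polynomial.eval_X]
    have hl1 : a ^ 2 ≤ l ^ 2 := by rw [← sq_abs l]; gcongr
    have hl2 : l ^ 2 ≤ b ^ 2 := by rw [← sq_abs l]; gcongr
    have hT := Polynomial.Chebyshev.abs_eval_T_real_le_one (k : ℤ)
      (x := (b ^ 2 + a ^ 2) / (b ^ 2 - a ^ 2) - 2 / (b ^ 2 - a ^ 2) * l ^ 2) (by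
        have : (b ^ 2 + a ^ 2) / (b ^ 2 - a ^ 2) - 2 / (b ^ 2 - a ^ 2) * l ^ 2
          = (b ^ 2 + a ^ 2 - 2 * l ^ 2) / (b ^ 2 - a ^ 2) := by ring
        rw [this, abs_div, abs_of_pos hD, div_le_one hD, abs_le]
        constructor <;> linarith)
    rw [abs_mul, abs_of_pos (inv_pos.2 ht0)]
    calc t⁻¹ * _ ≤ t⁻¹ * 1 := by gcongr
      _ ≤ (ρ ^ k / 2)⁻¹ := by rw [mul_one]; gcongr
      _ = 2 * ρ⁻¹ ^ k := by rw [inv_div, inv_pow]; ring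

lemma proj_eq {n : ℕ} (U : Matrix (Fin n) (Fin n) ℝ) (hU : Uᵀ * U = 1) (z : Fin n) :
    1 - vecMulVec (fun i => U i z) (fun i => U i z)
      = U * diagonal (fun i => if i = z then 0 else 1) * Uᵀ := by
  have hU' : U * Uᵀ = 1 := mul_eq_one_comm.1 hU
  have : diagonal (fun i => if i = z then (0:ℝ) else 1)
      = 1 - diagonal (fun i => if i = z then (1:ℝ) else 0) := by
    rw [← diagonal_one, diagonal_sub]
    congr 1; ext i; split_ifs <;> simp
  rw [this, mul_sub, sub_mul, mul_one, hU']
  congr 1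
  ext i j
  simp [mul_apply, vecMulVec_apply, diagonal_apply]

lemma eig_loc {M N : ℕ} (hN : 0 < N) (hMN : N ≤ M)
    (A : Matrix (Fin M) (Fin N) ℝ)
    (U : Matrix (Fin M) (Fin M) ℝ) (V : Matrix (Fin N) (Fin N) ℝ)
    (hU : Uᵀ * U = 1) (hV : Vᵀ * V = 1)
    (σ : Fin N → ℝ)
    (S : Matrix (Fin M) (Fin N) ℝ)
    (hS : ∀ i j, S i j = if (i : ℕ) = (j : ℕ) then σ j else 0)
    (hA : A = U * S * Vᵀ) (τ : ℝ)
    (B P B1 : Matrix (Fin M ⊕ Fin N) (Fin M ⊕ Fin N) ℝ)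
    (hB : B = Matrix.fromBlocks ((-τ) • 1) A Aᵀ ((-τ) • 1))
    (hP : P = Matrix.fromBlocks (1 - vecMulVec (fun i => U i ⟨0, by omega⟩) (fun i => U i ⟨0, by omega⟩)) 0 0
      (1 - vecMulVec (fun i => V i ⟨0, by omega⟩) (fun i => V i ⟨0, by omega⟩)))
    (hB1 : B1 = P * B * P)
    (l : ℝ) (x : Fin M ⊕ Fin N → ℝ) (hx : B1 *ᵥ x = l • x) (hPx : P *ᵥ x ≠ 0) :
    l = -τ ∨ ∃ i : Fin N, i ≠ ⟨0, hN⟩ ∧ (l = σ i - τ ∨ l = - σ i - τ) := by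
  have hU' : U * Uᵀ = 1 := mul_eq_one_comm.1 hU
  have hV' : V * Vᵀ = 1 := mul_eq_one_comm.1 hV
  set W : Matrix (Fin M ⊕ Fin N) (Fin M ⊕ Fin N) ℝ := fromBlocks U 0 0 V with hW
  have hWW : Wᵀ * W = 1 := by
    rw [hW, fromBlocks_transpose, fromBlocks_multiply]
    simp [hU, hV]
  set B' : Matrix (Fin M ⊕ Fin N) (Fin M ⊕ Fin N) ℝ :=
    fromBlocks ((-τ) • 1) S Sᵀ ((-τ) • 1) with hB'
  have hBW : B = W * B' * Wᵀ := by
    rw [hB, hW, hB', fromBlocks_transpose, fromBlocks_multiply, fromBlocks_multiply]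
    simp [hU', hV', hA, Matrix.mul_assoc]
  set d : Fin M ⊕ Fin N → ℝ := Sum.elim (fun i => if i = ⟨0, by omega⟩ then 0 else 1)
    (fun i => if i = ⟨0, by omega⟩ then 0 else 1) with hd
  have hPW : P = W * diagonal d * Wᵀ := by
    rw [hP, proj_eq U hU, proj_eq V hV, hd, ← fromBlocks_diagonal, hW, fromBlocks_transpose,
      fromBlocks_multiply, fromBlocks_multiply]
    simp
  have hB1W : B1 = W * (diagonal d * B' * diagonal d) * Wᵀ := by
    rw [hB1, hBW, hPW]
    calc _ = W * diagonal d * (Wᵀ * W) * B' * (Wᵀ * W) * diagonal d * Wᵀ := by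
          simp only [Matrix.mul_assoc]
      _ = _ := by rw [hWW]; simp only [Matrix.mul_assoc, Matrix.one_mul]
  set z := Wᵀ *ᵥ x with hz
  have hzz : diagonal d *ᵥ (B' *ᵥ (diagonal d *ᵥ z)) = l • z := by
    have := congrArg (fun y => Wᵀ *ᵥ y) hx
    simp only [mulVec_smul] at this
    rw [hz, ← this, hB1W]
    simp only [Matrix.mulVec_mulVec]
    congr 1
    calc _ = (1 : Matrix _ _ ℝ) * (diagonal d * B' * diagonal d * Wᵀ) := by
            simp only [Matrix.mul_assoc, Matrix.one_mul]
      _ = _ := by rw [← hWW]; simp only [Matrix.mul_assoc]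
  have hdz : diagonal d *ᵥ z ≠ 0 := by
    intro h
    apply hPx
    rw [hPW, ← Matrix.mulVec_mulVec, ← Matrix.mulVec_mulVec, h, Matrix.mulVec_zero]
  have hl : ∀ i : Fin M, i ≠ ⟨0, by omega⟩ →
      -τ * z (.inl i) + ∑ j, S i j * (d (.inr j) * z (.inr j)) = l * z (.inl i) := by
    intro i hi
    have := congrFun hzz (.inl i)
    have hd1 : d (.inl i) = 1 := by simp [hd, hi]
    rw [Matrix.mulVec_diagonal, hd1, one_mul] at this
    simpa [hB', Matrix.mulVec, dotProduct, Fintype.sum_sum_type,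
      diagonal_apply, Matrix.one_apply, hd1] using this
  have hr : ∀ i : Fin N, i ≠ ⟨0, by omega⟩ →
      (∑ j, S j i * (d (.inl j) * z (.inl j))) + -τ * z (.inr i) = l * z (.inr i) := by
    intro i hi
    have := congrFun hzz (.inr i)
    have hd1 : d (.inr i) = 1 := by simp [hd, hi]
    rw [Matrix.mulVec_diagonal, hd1, one_mul] at this
    simpa [hB', Matrix.mulVec, dotProduct, Fintype.sum_sum_type,
      diagonal_apply, Matrix.one_apply, hd1] using this
  -- paired equations
  have hp1 : ∀ i : Fin N, i ≠ ⟨0, hN⟩ →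
      -τ * z (.inl (Fin.castLE hMN i)) + σ i * z (.inr i) = l * z (.inl (Fin.castLE hMN i)) := by
    intro i hi
    have hi' : Fin.castLE hMN i ≠ ⟨0, by omega⟩ := by
      intro h; apply hi; ext; simpa [Fin.ext_iff] using h
    rw [← hl _ hi', Finset.sum_eq_single i]
    · simp [hS, hd, hi]
    · intro b _ hb
      have : (i : ℕ) ≠ b := fun h => hb (Fin.ext h.symm)
      simp [hS, this]
    · simp
  have hp2 : ∀ i : Fin N, i ≠ ⟨0, hN⟩ →
      σ i * z (.inl (Fin.castLE hMN i)) + -τ * z (.inr i) = l * z (.inr i) := by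
    intro i hi
    have hi' : Fin.castLE hMN i ≠ ⟨0, by omega⟩ := by
      intro h; apply hi; ext; simpa [Fin.ext_iff] using h
    rw [← hr _ hi, Finset.sum_eq_single (Fin.castLE hMN i)]
    · simp [hS, hd, hi']
    · intro b _ hb
      have : (b : ℕ) ≠ i := fun h => hb (Fin.ext h)
      simp [hS, this]
    · simp
  have hpair : ∀ i : Fin N, i ≠ ⟨0, hN⟩ → (z (.inl (Fin.castLE hMN i)) ≠ 0 ∨ z (.inr i) ≠ 0) →
      (l = σ i - τ ∨ l = - σ i - τ) := by
    intro i hi hne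
    have e1 := hp1 i hi
    have e2 := hp2 i hi
    have : (l - (σ i - τ)) * (l - (-σ i - τ)) = 0 := by
      rcases hne with h | h
      · refine (mul_eq_zero.1 (?_ : _ * z (.inl (Fin.castLE hMN i)) = 0)).resolve_right h
        linear_combination -(l + τ) * e1 - σ i * e2
      · refine (mul_eq_zero.1 (?_ : _ * z (.inr i) = 0)).resolve_right h
        linear_combination -(l + τ) * e2 - σ i * e1
    rcases mul_eq_zero.1 this with h | h
    · left; linarith
    · right; linarith
  obtain ⟨s, hs⟩ := Function.ne_iff.1 hdz
  rw [Matrix.mulVec_diagonal] at hs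
  rcases s with i | i
  · have hi : i ≠ ⟨0, by omega⟩ := by
      rintro rfl; simp [hd] at hs
    have hzi : z (.inl i) ≠ 0 := by
      intro h; simp [h] at hs
    by_cases hiN : (i : ℕ) < N
    · right
      refine ⟨⟨i, hiN⟩, ?_, hpair _ ?_ (Or.inl ?_)⟩
      · intro h; apply hi; simpa [Fin.ext_iff] using h
      · intro h; apply hi; simpa [Fin.ext_iff] using h
      · exact hzi
    · left
      have := hl i hi
      rw [Finset.sum_eq_zero] at this
      · have h2 : (l + τ) * z (.inl i) = 0 := by linear_combination -this
        have := (mul_eq_zero.1 h2).resolve_right hzi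
        linarith
      · intro j _
        have : (i : ℕ) ≠ j := by have := j.2; omega
        simp [hS, this]
  · have hi : i ≠ ⟨0, by omega⟩ := by
      rintro rfl; simp [hd] at hs
    have hzi : z (.inr i) ≠ 0 := by
      intro h; simp [h] at hs
    exact Or.inr ⟨i, hi, hpair i hi (Or.inr hzi)⟩

/-- Theorem 3.3(iii). MINRES bound for the JDSVD correction equation with
exact singular vectors, in the interior case
`(σ_min + σ_min,2)/2 < τ < (σ_max + σ_max,2)/2`. -/
theorem minres_bound_exact_interior {M N : ℕ} (hN : 2 ≤ N) (hMN : N ≤ M)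
    (A : Matrix (Fin M) (Fin N) ℝ)
    (U : Matrix (Fin M) (Fin M) ℝ) (V : Matrix (Fin N) (Fin N) ℝ)
    (hU : Uᵀ * U = 1) (hV : Vᵀ * V = 1)
    (σ : Fin N → ℝ) (hσ : ∀ i, 0 ≤ σ i)
    (S : Matrix (Fin M) (Fin N) ℝ)
    (hS : ∀ i j, S i j = if (i : ℕ) = (j : ℕ) then σ j else 0)
    (hA : A = U * S * Vᵀ)
    (τ : ℝ) (hτ0 : 0 ≤ τ)
    (hclosest : ∀ i : Fin N, i ≠ ⟨0, by omega⟩ → |σ ⟨0, by omega⟩ - τ| < |σ i - τ|)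
    (hτσ : ∀ i : Fin N, τ ≠ σ i)
    (σmax σmax2 σmin σmin2 : ℝ)
    (hσmax : IsGreatest (Set.range σ) σmax)
    (hσmax2 : IsGreatest (σ '' {i : Fin N | i ≠ ⟨0, by omega⟩}) σmax2)
    (hσmin : IsLeast (Set.range σ) σmin)
    (hσmin2 : IsLeast (σ '' {i : Fin N | i ≠ ⟨0, by omega⟩}) σmin2)
    (hτ1 : (σmin + σmin2) / 2 < τ) (hτ2 : τ < (σmax + σmax2) / 2)
    (d2 : ℝ)
    (hd2 : IsLeast ((fun i => |σ i - τ|) '' {i : Fin N | i ≠ ⟨0, by omega⟩}) d2)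
    (u1 : Fin M → ℝ) (hu1 : u1 = fun i => U i ⟨0, by omega⟩)
    (v1 : Fin N → ℝ) (hv1 : v1 = fun i => V i ⟨0, by omega⟩)
    (B P B1 : Matrix (Fin M ⊕ Fin N) (Fin M ⊕ Fin N) ℝ)
    (hB : B = Matrix.fromBlocks ((-τ) • 1) A Aᵀ ((-τ) • 1))
    (hP : P = Matrix.fromBlocks (1 - vecMulVec u1 u1) 0 0 (1 - vecMulVec v1 v1))
    (hB1 : B1 = P * B * P)
    (r : Fin M ⊕ Fin N → ℝ) (hr : P *ᵥ r = r) :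
    σ ⟨0, by omega⟩ ≠ σmax ∧ σ ⟨0, by omega⟩ ≠ σmin ∧
    ∀ j : ℕ, ∃ w ∈ Krylov B1 r j,
      vnorm (B1 *ᵥ w + r) ≤
        2 * (1 - 2 / (1 + (σmax + τ) / d2)) ^ (j / 2) * vnorm r := by
  obtain ⟨⟨im, him⟩, hmaxub⟩ := hσmax
  obtain ⟨⟨im2, him2n, him2⟩, hmax2ub⟩ := hσmax2
  obtain ⟨⟨il, hil⟩, hminlb⟩ := hσmin
  obtain ⟨⟨il2, hil2n, hil2⟩, hmin2lb⟩ := hσmin2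
  obtain ⟨⟨id, hidn, hid⟩, hd2lb⟩ := hd2
  have hmax : ∀ i, σ i ≤ σmax := fun i => hmaxub ⟨i, rfl⟩
  have hmin : ∀ i, σmin ≤ σ i := fun i => hminlb ⟨i, rfl⟩
  have hdl : ∀ i, i ≠ ⟨0, by omega⟩ → d2 ≤ |σ i - τ| := fun i hi => hd2lb ⟨i, hi, rfl⟩
  have c1 : σ ⟨0, by omega⟩ ≠ σmax := by
    intro h
    have h1 := hclosest im2 him2n
    have h2 := hmax im2
    rw [h, him2] at h1
    rw [him2] at h2
    rcases abs_cases (σmax - τ) with ⟨e, _⟩ | ⟨e, _⟩ <;>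
    rcases abs_cases (σmax2 - τ) with ⟨e', _⟩ | ⟨e', _⟩ <;> linarith
  have c2 : σ ⟨0, by omega⟩ ≠ σmin := by
    intro h
    have h1 := hclosest il2 hil2n
    have h2 := hmin il2
    rw [h, hil2] at h1
    rw [hil2] at h2
    rcases abs_cases (σmin - τ) with ⟨e, _⟩ | ⟨e, _⟩ <;>
    rcases abs_cases (σmin2 - τ) with ⟨e', _⟩ | ⟨e', _⟩ <;> linarith
  refine ⟨c1, c2, fun j => ?_⟩
  have hd0 : 0 < d2 := by
    rw [← hid]
    exact lt_of_le_of_lt (abs_nonneg _) (hclosest id hidn)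
  have hil0 : il ≠ ⟨0, by omega⟩ := by
    rintro rfl; exact c2 hil
  have hs2 : σmin2 ≤ σmin := hil ▸ hmin2lb ⟨il, hil0, rfl⟩
  have hs2' : σmin ≤ σmin2 := hil2 ▸ hmin il2
  have hmin0 : 0 ≤ σmin := hil ▸ hσ il
  have hdτ : d2 ≤ τ := by
    have := hdl il hil0
    rw [hil, abs_of_neg (by linarith)] at this
    linarith
  have hmaxτ : τ < σmax := by
    have : σmax2 ≤ σmax := him2 ▸ hmax im2
    linarith
  have hlt : d2 < σmax + τ := by linarith
  obtain ⟨p, hp0, hpd, hpb⟩ := cheb_exists d2 (σmax + τ) hd0 hlt (j / 2)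
  obtain ⟨w, hw, hwe⟩ := krylov_poly B1 r p hp0 j (hpd.trans (by omega))
  refine ⟨w, hw, ?_⟩
  rw [hwe]
  have hPt : Pᵀ = P := by
    rw [hP, fromBlocks_transpose]
    simp [transpose_vecMulVec]
  have hBt : Bᵀ = B := by
    rw [hB, fromBlocks_transpose]
    simp
  have hB1t : B1ᵀ = B1 := by
    rw [hB1, transpose_mul, transpose_mul, hPt, hBt, Matrix.mul_assoc]
  have hq0 : 0 ≤ 1 - 2 / (1 + (σmax + τ) / d2) := by
    have : 1 ≤ (σmax + τ) / d2 := (one_le_div hd0).2 hlt.le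
    rw [sub_nonneg, div_le_one (by linarith)]
    linarith
  refine poly_bound B1 hB1t r p _ (by positivity) ?_
  intro l x hx hrx
  have hPx : P *ᵥ x ≠ 0 := by
    intro h
    apply hrx
    rw [← hr, dotProduct_comm, Matrix.dotProduct_mulVec, ← Matrix.mulVec_transpose, hPt, h,
      zero_dotProduct]
  have hloc := eig_loc (by omega) hMN A U V hU hV σ S hS hA τ B P B1 hB
    (by rw [hP, hu1, hv1]) hB1 l x hx hPx
  rcases hloc with rfl | ⟨i, hi, rfl | rfl⟩
  · apply hpb <;> rw [abs_neg, abs_of_nonneg hτ0] <;> linarith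
  · refine hpb _ (hdl i hi) ?_
    have := hmax i
    have := hσ i
    rw [abs_le]; constructor <;> linarith
  · have h1 := hmax i
    have h2 := hσ i
    have h3 : |-σ i - τ| = σ i + τ := by
      rw [abs_of_nonpos (by linarith)]; ring
    refine hpb _ ?_ ?_
    · rw [h3]
      refine (hdl i hi).trans ?_
      rw [abs_le]; constructor <;> linarith
    · rw [h3]; linarith
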